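/- There exists a universal constant C > 0 such that for every m ≥ 2, every set X of m points in ℝ^m, and every ε with 0 < ε < 1, there exist a natural number k with k ≤ ⌈C · (log m)/ε²⌉ and a map F : ℝ^m → ℝ^k such that for all x, y ∈ X, (1 − ε)·‖x − y‖² ≤ ‖F(x) − F(y)‖² ≤ (1 + ε)·‖x − y‖², where ‖·‖ denotes the Euclidean norm. -/

import Mathlib

open Real

/-!
Let `g₁, …, g_k` be independent standard Gaussian vectors in a Euclidean space. For a unit vector
`u` the variables `⟪gᵢ, u⟫` are independent standard Gaussians, so `∑ᵢ ⟪gᵢ, u⟫²` is a chi-squared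
variable with `k` degrees of freedom, and Chernoff's bound, applied to its moment generating
function `t ↦ (1 - 2t)^(-k/2)`, shows that it leaves `[(1 - ε) k, (1 + ε) k]` with probability at
most `2 exp (-k ε² / 16)`. So the random linear map `x ↦ k^(-1/2) (⟪gᵢ, x⟫)ᵢ` distorts a given
squared norm by more than a factor `1 ± ε` only with that probability. For `k ≥ 48 log n / ε²`
this is at most `2 / n³`, and a union bound over the fewer than `n²` differences of `n` points
leaves a realization of the map that distorts none of them.

The dimension of the ambient space never enters. The points may even lie in an infinite-dimensional
inner product space, since one can first project orthogonally onto the span of their differences.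
-/

section ChiSquared

open MeasureTheory ProbabilityTheory
open scoped NNReal

-- For `2 * v * t ≥ 1` the integral diverges, and both sides take the junk value `0`.
theorem mgf_sq_gaussianReal (v : ℝ≥0) (t : ℝ) :
    mgf (fun x ↦ x ^ 2) (gaussianReal 0 v) t = (√(1 - 2 * v * t))⁻¹ := by
  obtain rfl | hv := eq_or_ne v 0
  · simp [mgf]
  have hv' : (v : ℝ) ≠ 0 := mod_cast hv
  have integrand_eq (x : ℝ) : gaussianPDFReal 0 v x • rexp (t * x ^ 2) =
      (√(2 * π * v))⁻¹ * rexp (-((1 - 2 * v * t) / (2 * v)) * x ^ 2) := by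
    rw [gaussianPDFReal, smul_eq_mul, mul_assoc, ← exp_add]
    congr 2
    field_simp
    ring
  simp_rw [mgf, integral_gaussianReal_eq_integral_smul hv, integrand_eq]
  rw [integral_const_mul, integral_gaussian, ← sqrt_inv, ← sqrt_inv, ← sqrt_mul (by positivity)]
  congr 1
  have := pi_ne_zero
  rw [div_div_eq_mul_div, div_eq_mul_inv]
  field_simp

theorem inv_sqrt_one_sub_le_exp {s : ℝ} (hs : s ≤ 1 / 2) :
    (√(1 - s))⁻¹ ≤ rexp (s / 2 + s ^ 2) := by
  have hs' : 0 < 1 - s := by linarith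
  rw [← sqrt_inv, sqrt_le_iff, ← exp_nat_mul]
  refine ⟨(exp_pos _).le, ?_⟩
  calc (1 - s)⁻¹ = s / (1 - s) + 1 := by field_simp; ring
    _ ≤ rexp (s / (1 - s)) := add_one_le_exp _
    _ ≤ rexp ((2 : ℕ) * (s / 2 + s ^ 2)) := by
      gcongr
      rw [div_le_iff₀ hs']
      push_cast
      nlinarith [mul_nonneg (sq_nonneg s) (by linarith : 0 ≤ 1 - 2 * s)]

variable {ι Ω : Type*} [Fintype ι] {mΩ : MeasurableSpace Ω} {μ : Measure Ω} {X : ι → Ω → ℝ}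

theorem mgf_sum_sq_of_gaussianReal (hindep : iIndepFun X μ)
    (hlaw : ∀ i, HasLaw (X i) (gaussianReal 0 1) μ) (t : ℝ) :
    mgf (fun ω ↦ ∑ i, X i ω ^ 2) μ t = (√(1 - 2 * t))⁻¹ ^ Fintype.card ι := by
  have mgf_sq (i : ι) : mgf (fun ω ↦ X i ω ^ 2) μ t = (√(1 - 2 * t))⁻¹ := by
    have := mgf_sq_gaussianReal 1 t
    rw [← (hlaw i).map_eq, mgf_map (hlaw i).aemeasurable (by fun_prop)] at this
    simpa [Function.comp_def] using this
  have hindep_sq : iIndepFun (fun i ω ↦ X i ω ^ 2) μ :=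
    hindep.comp (fun _ x ↦ x ^ 2) fun _ ↦ by fun_prop
  have hmeas (i : ι) : AEMeasurable (fun ω ↦ X i ω ^ 2) μ := (hlaw i).aemeasurable.pow_const 2
  calc mgf (fun ω ↦ ∑ i, X i ω ^ 2) μ t = mgf (∑ i, fun ω ↦ X i ω ^ 2) μ t := by
        congr 1 with ω
        rw [Finset.sum_apply]
    _ = ∏ i, mgf (fun ω ↦ X i ω ^ 2) μ t := hindep_sq.mgf_sum₀ hmeas _
    _ = (√(1 - 2 * t))⁻¹ ^ Fintype.card ι := by simp [mgf_sq]

theorem mgf_sum_sq_le_of_gaussianReal (hindep : iIndepFun X μ)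
    (hlaw : ∀ i, HasLaw (X i) (gaussianReal 0 1) μ) {t : ℝ} (ht : t ≤ 1 / 4) :
    mgf (fun ω ↦ ∑ i, X i ω ^ 2) μ t ≤ rexp (Fintype.card ι * (t + 4 * t ^ 2)) := by
  rw [mgf_sum_sq_of_gaussianReal hindep hlaw, exp_nat_mul]
  gcongr
  refine (inv_sqrt_one_sub_le_exp (by linarith)).trans_eq ?_
  ring_nf

theorem integrable_exp_mul_sum_sq_of_gaussianReal (hindep : iIndepFun X μ)
    (hlaw : ∀ i, HasLaw (X i) (gaussianReal 0 1) μ) {t : ℝ} (ht : t < 1 / 2) :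
    Integrable (fun ω ↦ rexp (t * ∑ i, X i ω ^ 2)) μ := by
  have := hindep.isProbabilityMeasure
  rw [← mgf_pos_iff, mgf_sum_sq_of_gaussianReal hindep hlaw]
  have : 0 < 1 - 2 * t := by linarith
  positivity

-- In both tail bounds `t = ± ε / 8` minimizes the exponent `card ι * (4 * t ^ 2 - |t| * ε)`.
theorem measureReal_le_sum_sq_le_exp (hindep : iIndepFun X μ)
    (hlaw : ∀ i, HasLaw (X i) (gaussianReal 0 1) μ) {ε : ℝ} (hε₀ : 0 ≤ ε) (hε₂ : ε ≤ 2) :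
    μ.real {ω | (1 + ε) * Fintype.card ι ≤ ∑ i, X i ω ^ 2} ≤
      rexp (-(Fintype.card ι * ε ^ 2 / 16)) := by
  have := hindep.isProbabilityMeasure
  calc μ.real {ω | (1 + ε) * Fintype.card ι ≤ ∑ i, X i ω ^ 2}
      ≤ rexp (-(ε / 8) * ((1 + ε) * Fintype.card ι)) * mgf (fun ω ↦ ∑ i, X i ω ^ 2) μ (ε / 8) :=
        measure_ge_le_exp_mul_mgf _ (by positivity)
          (integrable_exp_mul_sum_sq_of_gaussianReal hindep hlaw (by linarith))
    _ ≤ rexp (-(ε / 8) * ((1 + ε) * Fintype.card ι)) *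
          rexp (Fintype.card ι * (ε / 8 + 4 * (ε / 8) ^ 2)) := by
        gcongr
        exact mgf_sum_sq_le_of_gaussianReal hindep hlaw (by linarith)
    _ = rexp (-(Fintype.card ι * ε ^ 2 / 16)) := by
        rw [← exp_add]
        ring_nf

theorem measureReal_sum_sq_le_le_exp (hindep : iIndepFun X μ)
    (hlaw : ∀ i, HasLaw (X i) (gaussianReal 0 1) μ) {ε : ℝ} (hε₀ : 0 ≤ ε) :
    μ.real {ω | ∑ i, X i ω ^ 2 ≤ (1 - ε) * Fintype.card ι} ≤
      rexp (-(Fintype.card ι * ε ^ 2 / 16)) := by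
  have := hindep.isProbabilityMeasure
  calc μ.real {ω | ∑ i, X i ω ^ 2 ≤ (1 - ε) * Fintype.card ι}
      ≤ rexp (- -(ε / 8) * ((1 - ε) * Fintype.card ι)) *
          mgf (fun ω ↦ ∑ i, X i ω ^ 2) μ (-(ε / 8)) :=
        measure_le_le_exp_mul_mgf _ (by linarith)
          (integrable_exp_mul_sum_sq_of_gaussianReal hindep hlaw (by linarith))
    _ ≤ rexp (- -(ε / 8) * ((1 - ε) * Fintype.card ι)) *
          rexp (Fintype.card ι * (-(ε / 8) + 4 * (-(ε / 8)) ^ 2)) := by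
        gcongr
        exact mgf_sum_sq_le_of_gaussianReal hindep hlaw (by linarith)
    _ = rexp (-(Fintype.card ι * ε ^ 2 / 16)) := by
        rw [← exp_add]
        ring_nf

theorem measureReal_le_abs_sum_sq_sub_card_le (hindep : iIndepFun X μ)
    (hlaw : ∀ i, HasLaw (X i) (gaussianReal 0 1) μ) {ε : ℝ} (hε₀ : 0 ≤ ε) (hε₂ : ε ≤ 2) :
    μ.real {ω | ε * Fintype.card ι ≤ |∑ i, X i ω ^ 2 - Fintype.card ι|} ≤
      2 * rexp (-(Fintype.card ι * ε ^ 2 / 16)) := by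
  have := hindep.isProbabilityMeasure
  have subset_tails : {ω | ε * Fintype.card ι ≤ |∑ i, X i ω ^ 2 - Fintype.card ι|} ⊆
      {ω | (1 + ε) * Fintype.card ι ≤ ∑ i, X i ω ^ 2} ∪
        {ω | ∑ i, X i ω ^ 2 ≤ (1 - ε) * Fintype.card ι} := by
    intro ω hω
    simp only [Set.mem_union, Set.mem_ofPred_eq, le_abs] at hω ⊢
    exact hω.imp (fun h ↦ by linarith) (fun h ↦ by linarith)
  rw [two_mul]
  exact (measureReal_mono subset_tails).trans <| (measureReal_union_le _ _).trans <|
    add_le_add (measureReal_le_sum_sq_le_exp hindep hlaw hε₀ hε₂)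
      (measureReal_sum_sq_le_le_exp hindep hlaw hε₀)

end ChiSquared

section RandomProjection

open MeasureTheory ProbabilityTheory

variable {ι E : Type*} [Fintype ι] [NormedAddCommGroup E] [InnerProductSpace ℝ E]

/-- The linear map `x ↦ k^(-1/2) (⟪gᵢ, x⟫)ᵢ` whose matrix has the `k` rows `gᵢ`, up to a scaling.
The scaling makes it preserve squared norms on average when the `gᵢ` are standard Gaussian
vectors: it is then the Gaussian random projection of the Johnson–Lindenstrauss lemma. -/
noncomputable def scaledRowMap (g : ι → E) : E →L[ℝ] EuclideanSpace ℝ ι :=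
  (√(Fintype.card ι))⁻¹ •
    ((EuclideanSpace.equiv ι ℝ).symm.toContinuousLinearMap ∘L
      ContinuousLinearMap.pi fun i ↦ innerSL ℝ (g i))

theorem card_mul_norm_scaledRowMap_sq (g : ι → E) (x : E) :
    Fintype.card ι * ‖scaledRowMap g x‖ ^ 2 = ∑ i, inner ℝ (g i) x ^ 2 := by
  have apply_coord (i : ι) :
      scaledRowMap g x i = (√(Fintype.card ι))⁻¹ * inner ℝ (g i) x := rfl
  obtain _ | _ := isEmpty_or_nonempty ι
  · simp
  simp_rw [EuclideanSpace.real_norm_sq_eq, apply_coord, mul_pow, ← Finset.mul_sum]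
  rw [inv_pow, sq_sqrt (by positivity), mul_inv_cancel_left₀ (by positivity)]

section FiniteDimensional

variable [FiniteDimensional ℝ E] [MeasurableSpace E] [BorelSpace E]

theorem hasLaw_inner_stdGaussian (x : E) :
    HasLaw (fun g ↦ inner ℝ g x) (gaussianReal 0 (‖x‖₊ ^ 2)) (stdGaussian E) where
  map_eq := by
    have inner_eq : (fun g ↦ inner ℝ g x) = innerSL ℝ x := by
      ext g
      exact real_inner_comm _ _
    rw [inner_eq, IsGaussian.map_eq_gaussianReal, integral_strongDual_stdGaussian,
      variance_dual_stdGaussian, innerSL_apply_norm]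
    congr
    ext
    simp

theorem hasLaw_inner_div_norm_stdGaussian {x : E} (hx : x ≠ 0) :
    HasLaw (fun g ↦ inner ℝ g x / ‖x‖) (gaussianReal 0 1) (stdGaussian E) := by
  convert gaussianReal_div_const (hasLaw_inner_stdGaussian x) ‖x‖ using 2
  · simp
  · ext
    simp [hx]

theorem measureReal_distortion_scaledRowMap_le (x : E) {ε : ℝ} (hε₀ : 0 ≤ ε) (hε₂ : ε ≤ 2) :
    (Measure.pi fun _ : ι ↦ stdGaussian E).real
        {g | ε * ‖x‖ ^ 2 < |‖scaledRowMap g x‖ ^ 2 - ‖x‖ ^ 2|} ≤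
      2 * rexp (-(Fintype.card ι * ε ^ 2 / 16)) := by
  obtain rfl | hx := eq_or_ne x 0
  · simpa using (exp_pos _).le
  have : 0 < ‖x‖ := norm_pos_iff.2 hx
  let Z (i : ι) (g : ι → E) : ℝ := inner ℝ (g i) x / ‖x‖
  have hlaw (i : ι) : HasLaw (Z i) (gaussianReal 0 1) (Measure.pi fun _ ↦ stdGaussian E) :=
    (hasLaw_inner_div_norm_stdGaussian hx).fun_comp
      (measurePreserving_eval (fun _ ↦ stdGaussian E) i).hasLaw
  have hindep : iIndepFun Z (Measure.pi fun _ ↦ stdGaussian E) :=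
    iIndepFun_pi (X := fun _ g ↦ inner ℝ g x / ‖x‖) fun _ ↦ by fun_prop
  have sum_sq_sub_card (g : ι → E) : ∑ i, Z i g ^ 2 - Fintype.card ι =
      Fintype.card ι / ‖x‖ ^ 2 * (‖scaledRowMap g x‖ ^ 2 - ‖x‖ ^ 2) := by
    simp_rw [Z, div_pow, ← Finset.sum_div, ← card_mul_norm_scaledRowMap_sq]
    field_simp
  have subset_tail : {g | ε * ‖x‖ ^ 2 < |‖scaledRowMap g x‖ ^ 2 - ‖x‖ ^ 2|} ⊆
      {g | ε * Fintype.card ι ≤ |∑ i, Z i g ^ 2 - Fintype.card ι|} := by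
    intro g hg
    rw [Set.mem_ofPred_eq] at hg ⊢
    calc ε * Fintype.card ι = Fintype.card ι / ‖x‖ ^ 2 * (ε * ‖x‖ ^ 2) := by field_simp
      _ ≤ Fintype.card ι / ‖x‖ ^ 2 * |‖scaledRowMap g x‖ ^ 2 - ‖x‖ ^ 2| := by gcongr
      _ = |∑ i, Z i g ^ 2 - Fintype.card ι| := by
        rw [sum_sq_sub_card, abs_mul, abs_of_nonneg (a := _ / _) (by positivity)]
  exact (measureReal_mono subset_tail).trans
    (measureReal_le_abs_sum_sq_sub_card_le hindep hlaw hε₀ hε₂)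

end FiniteDimensional

variable {α : Type*}

theorem exists_clm_distortion_le_of_finiteDimensional [FiniteDimensional ℝ E] (s : Finset α)
    (v : α → E) {ε : ℝ} (hε₀ : 0 ≤ ε) (hε₂ : ε ≤ 2)
    (hs : s.card * (2 * rexp (-(Fintype.card ι * ε ^ 2 / 16))) < 1) :
    ∃ F : E →L[ℝ] EuclideanSpace ℝ ι, ∀ a ∈ s, |‖F (v a)‖ ^ 2 - ‖v a‖ ^ 2| ≤ ε * ‖v a‖ ^ 2 := by
  borelize E
  let bad (a : α) : Set (ι → E) :=
    {g | ε * ‖v a‖ ^ 2 < |‖scaledRowMap g (v a)‖ ^ 2 - ‖v a‖ ^ 2|}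
  have measureReal_bad_lt_one :
      (Measure.pi fun _ : ι ↦ stdGaussian E).real (⋃ a ∈ s, bad a) < 1 :=
    calc (Measure.pi fun _ : ι ↦ stdGaussian E).real (⋃ a ∈ s, bad a)
        ≤ ∑ a ∈ s, (Measure.pi fun _ : ι ↦ stdGaussian E).real (bad a) :=
          measureReal_biUnion_finset_le _ _
      _ ≤ s.card * (2 * rexp (-(Fintype.card ι * ε ^ 2 / 16))) := by
          rw [← nsmul_eq_mul]
          exact Finset.sum_le_card_nsmul _ _ _ fun a _ ↦
            measureReal_distortion_scaledRowMap_le (v a) hε₀ hε₂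
      _ < 1 := hs
  obtain ⟨g, hg⟩ : ∃ g, g ∉ ⋃ a ∈ s, bad a := by
    rw [← Set.ne_univ_iff_exists_notMem]
    intro h
    simp [h] at measureReal_bad_lt_one
  refine ⟨scaledRowMap g, fun a ha ↦ not_lt.1 fun h ↦ hg ?_⟩
  exact Set.mem_biUnion ha h

theorem exists_clm_distortion_le (s : Finset α) (v : α → E) {ε : ℝ} (hε₀ : 0 ≤ ε) (hε₂ : ε ≤ 2)
    (hs : s.card * (2 * rexp (-(Fintype.card ι * ε ^ 2 / 16))) < 1) :
    ∃ F : E →L[ℝ] EuclideanSpace ℝ ι, ∀ a ∈ s, |‖F (v a)‖ ^ 2 - ‖v a‖ ^ 2| ≤ ε * ‖v a‖ ^ 2 := by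
  let S : Submodule ℝ E := Submodule.span ℝ (v '' s)
  have : FiniteDimensional ℝ S := .span_of_finite ℝ (s.finite_toSet.image v)
  let P : E →L[ℝ] S := S.orthogonalProjectionOnto
  obtain ⟨F, hF⟩ := exists_clm_distortion_le_of_finiteDimensional s (P ∘ v) hε₀ hε₂ hs
  refine ⟨F ∘L P, fun a ha ↦ ?_⟩
  have norm_proj : ‖P (v a)‖ = ‖v a‖ := congrArg norm <|
    S.starProjection_eq_self_iff.2 (Submodule.subset_span (Set.mem_image_of_mem v ha))
  simpa only [Function.comp_apply, ContinuousLinearMap.comp_apply, norm_proj] using hF a ha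

end RandomProjection

theorem card_offDiag_mul_two_mul_exp_neg_lt_one {α : Type*} (X : Finset α) {a : ℝ}
    (ha : 3 * log X.card ≤ a) : X.offDiag.card * (2 * rexp (-a)) < 1 := by
  obtain rfl | hX := X.eq_empty_or_nonempty
  · simp
  set n := X.card
  have hn : (0 : ℝ) < n := mod_cast hX.card_pos
  have card_offDiag : (X.offDiag.card : ℝ) = n * n - n := by
    rw [X.offDiag_card, Nat.cast_sub (Nat.le_mul_self n), Nat.cast_mul]
  have exp_neg_le : rexp (-a) ≤ ((n : ℝ) ^ 3)⁻¹ := by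
    rw [exp_neg, ← exp_log hn, ← exp_nat_mul]
    gcongr
    exact_mod_cast ha
  calc X.offDiag.card * (2 * rexp (-a)) ≤ X.offDiag.card * (2 * ((n : ℝ) ^ 3)⁻¹) := by gcongr
    _ = 2 * (n - 1) / n ^ 2 := by
      rw [card_offDiag]
      field_simp
    _ < 1 := by
      rw [div_lt_one (by positivity)]
      nlinarith [sq_nonneg ((n : ℝ) - 1)]

theorem johnson_lindenstrauss_general {E : Type*} [NormedAddCommGroup E] [InnerProductSpace ℝ E]
    (X : Finset E) {ε : ℝ} (hε₀ : 0 ≤ ε) (hε₂ : ε ≤ 2) {k : ℕ}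
    (hk : 48 * log X.card ≤ k * ε ^ 2) :
    ∃ F : E →L[ℝ] EuclideanSpace ℝ (Fin k), ∀ x ∈ X, ∀ y ∈ X,
      (1 - ε) * ‖x - y‖ ^ 2 ≤ ‖F x - F y‖ ^ 2 ∧ ‖F x - F y‖ ^ 2 ≤ (1 + ε) * ‖x - y‖ ^ 2 := by
  obtain ⟨F, hF⟩ := exists_clm_distortion_le (ι := Fin k) X.offDiag (fun p ↦ p.1 - p.2) hε₀ hε₂
    (card_offDiag_mul_two_mul_exp_neg_lt_one X (by rw [Fintype.card_fin]; linarith))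
  refine ⟨F, fun x hx y hy ↦ ?_⟩
  obtain rfl | hxy := eq_or_ne x y
  · simp
  have distortion_le := abs_le.1 (hF (x, y) (Finset.mem_offDiag.2 ⟨hx, hy, hxy⟩))
  rw [map_sub] at distortion_le
  constructor <;> linarith

/-- **Johnson–Lindenstrauss Lemma.** There is a universal constant `C > 0` such that
for every `m ≥ 2`, every set `X` of `m` points in `ℝ^m` and every `0 < ε < 1`, there
are `k ≤ ⌈C · log m / ε²⌉` and a map `F : ℝ^m → ℝ^k` preserving all squared pairwise
distances of `X` up to factors `1 ± ε`. -/
theorem johnson_lindenstrauss :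
    ∃ C : ℝ, 0 < C ∧
      ∀ m : ℕ, 2 ≤ m →
        ∀ X : Finset (EuclideanSpace ℝ (Fin m)), X.card = m →
          ∀ ε : ℝ, 0 < ε → ε < 1 →
            ∃ k : ℕ, k ≤ ⌈C * Real.log m / ε ^ 2⌉₊ ∧
              ∃ F : EuclideanSpace ℝ (Fin m) → EuclideanSpace ℝ (Fin k),
                ∀ x ∈ X, ∀ y ∈ X,
                  (1 - ε) * ‖x - y‖ ^ 2 ≤ ‖F x - F y‖ ^ 2 ∧
                  ‖F x - F y‖ ^ 2 ≤ (1 + ε) * ‖x - y‖ ^ 2 := by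
  refine ⟨48, by norm_num, fun m _ X hX ε hε₀ hε₁ ↦ ⟨_, le_rfl, ?_⟩⟩
  have hk : 48 * log X.card ≤ ⌈48 * log m / ε ^ 2⌉₊ * ε ^ 2 := by
    rw [hX, ← div_le_iff₀ (by positivity)]
    exact Nat.le_ceil _
  obtain ⟨F, hF⟩ := johnson_lindenstrauss_general X hε₀.le (by linarith) hk
  exact ⟨F, hF⟩
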